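/- The set α = {(1/6, 3/4), (5/6, 3/4)} is an optimal set of two-means for P, and the second quantization error is V₂ = 31/288; that is, for every set β ⊂ ℝ² with card(β) ≤ 2, ∫ min_{c∈β} ‖x−c‖² dP ≥ 31/288, with equality for α. -/

import Mathlib

open MeasureTheory ProbabilityTheory
open scoped ENNReal

noncomputable section

abbrev E2 : Type := EuclideanSpace ℝ (Fin 2)

/-- The point (a,b) of the Euclidean plane. -/
def pt (a b : ℝ) : E2 := (WithLp.equiv 2 (Fin 2 → ℝ)).symm ![a, b]

/-- The four generating similarities S₁,…,S₄ (indexed 0,…,3) of the Sierpiński carpet. -/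
def S : Fin 4 → E2 → E2
  | 0 => fun x => pt (x 0 / 3) (x 1 / 3)
  | 1 => fun x => pt (x 0 / 3 + 2/3) (x 1 / 3)
  | 2 => fun x => pt (x 0 / 3) (x 1 / 3 + 2/3)
  | 3 => fun x => pt (x 0 / 3 + 2/3) (x 1 / 3 + 2/3)

/-- The self-affinity equation P = (1/8)P∘S₁⁻¹ + (1/8)P∘S₂⁻¹ + (3/8)P∘S₃⁻¹ + (3/8)P∘S₄⁻¹. -/
def carpetEq (P : Measure E2) : Prop :=
  P = (1/8 : ℝ≥0∞) • P.map (S 0) + (1/8 : ℝ≥0∞) • P.map (S 1)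
    + (3/8 : ℝ≥0∞) • P.map (S 2) + (3/8 : ℝ≥0∞) • P.map (S 3)

/-- The unit square [0,1]². -/
def unitSq : Set E2 := {x | ∀ i, x i ∈ Set.Icc (0:ℝ) 1}

/-- S_ω = S_{ω₁} ∘ ⋯ ∘ S_{ω_k} for a word ω. -/
def Sw (w : List (Fin 4)) : E2 → E2 := fun x => w.foldr S x

/-- The basic square J_ω = S_ω([0,1]²). -/
def Jw (w : List (Fin 4)) : Set E2 := Sw w '' unitSq

/-- The basic square J_i of the first level. -/
def Jset (i : Fin 4) : Set E2 := S i '' unitSq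

/-- The mass centroid (conditional expectation) of P on a set A. -/
def ctr (P : Measure E2) (A : Set E2) : E2 := (P A).toReal⁻¹ • ∫ x in A, x ∂P

/-- E(ω) : distortion error on J_ω about its centroid a(ω) = S_ω(1/2,3/4). -/
def Err (P : Measure E2) (w : List (Fin 4)) : ℝ :=
  ∫ x in Jw w, ‖x - Sw w (pt (1/2) (3/4))‖^2 ∂P

/-- E(ωi, ωj) : distortion error on J_{ωi} ∪ J_{ωj} about its centroid. -/
def Epair (P : Measure E2) (w : List (Fin 4)) (i j : Fin 4) : ℝ :=
  ∫ x in (Jw (w ++ [i]) ∪ Jw (w ++ [j])),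
    ‖x - ctr P (Jw (w ++ [i]) ∪ Jw (w ++ [j]))‖^2 ∂P

/-!
Two centres serve a set `s` and its complement, and then cost at least the total variance `7 / 32`
minus the variance `‖M‖² / (p * (1 - p))` between the two parts, where `p = P s` and `M` is the
first moment of `P` on `s` about the mean. So it is enough to show `‖M‖² ≤ p * (1 - p) / 9` for
every measurable set `s`; the left half of the carpet gives equality. The covariance matrix of `P`
only gives the constant `1 / 8`. Self-similarity improves it: `3 * M` is the average over the four
cells of the moment of the rescaled set plus its mass times the digit of the cell. The digit terms
are controlled by Bessel's inequality on the four cells, and the moments by the covariance bound in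
each cell together with `|x 0 - 1 / 2| ≤ 1 / 2`.
-/

open Set
open scoped NNReal RealInnerProductSpace

section CenteredFunctions

variable {Ω V : Type*} [MeasurableSpace Ω] {μ : Measure Ω} [NormedAddCommGroup V] [NormedSpace ℝ V]
  {f : Ω → ℝ} {g : Ω → V} {s : Set Ω}

lemma sq_integral_le_measureReal_univ_mul [IsFiniteMeasure μ] (hf : MemLp f 2 μ) :
    (∫ x, f x ∂μ) ^ 2 ≤ μ.real univ * ∫ x, f x ^ 2 ∂μ := by
  rcases (measureReal_nonneg (μ := μ) (s := univ)).eq_or_lt with hμ | hμ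
  · rw [eq_comm, measureReal_eq_zero_iff, Measure.measure_univ_eq_zero] at hμ
    simp [hμ]
  set m := μ.real univ
  set I := ∫ x, f x ∂μ with hI
  have int_sq : Integrable (fun x ↦ m ^ 2 * f x ^ 2) μ := hf.integrable_sq.const_mul _
  have int_lin : Integrable (fun x ↦ 2 * m * I * f x) μ :=
    (hf.integrable one_le_two).const_mul _
  have expand : ∫ x, (m * f x - I) ^ 2 ∂μ = m * (m * (∫ x, f x ^ 2 ∂μ) - I ^ 2) := by
    calc ∫ x, (m * f x - I) ^ 2 ∂μ
        = ∫ x, (m ^ 2 * f x ^ 2 - 2 * m * I * f x + I ^ 2) ∂μ := by congr with x; ring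
      _ = m ^ 2 * (∫ x, f x ^ 2 ∂μ) - 2 * m * I * I + m * I ^ 2 := by
        rw [integral_add (f := fun x ↦ m ^ 2 * f x ^ 2 - 2 * m * I * f x) (int_sq.sub int_lin)
          (integrable_const _), integral_sub int_sq int_lin, integral_const_mul,
          integral_const_mul, integral_const, ← hI, smul_eq_mul]
      _ = _ := by ring
  have hsq : 0 ≤ ∫ x, (m * f x - I) ^ 2 ∂μ := integral_nonneg fun x ↦ sq_nonneg _
  linarith [nonneg_of_mul_nonneg_right (expand ▸ hsq) hμ]

lemma setIntegral_compl_eq_neg (hg : Integrable g μ) (hg₀ : ∫ x, g x ∂μ = 0)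
    (hs : MeasurableSet s) : ∫ x in sᶜ, g x ∂μ = -∫ x in s, g x ∂μ := by
  rw [setIntegral_compl hs hg, hg₀, zero_sub]

/- Cauchy–Schwarz on `s` and on `sᶜ`, where the two integrals of `f` are opposite. -/
lemma sq_setIntegral_le_of_integral_eq_zero [IsProbabilityMeasure μ] (hf : MemLp f 2 μ)
    (hf₀ : ∫ x, f x ∂μ = 0) (hs : MeasurableSet s) :
    (∫ x in s, f x ∂μ) ^ 2 ≤ μ.real s * (1 - μ.real s) * ∫ x, f x ^ 2 ∂μ := by
  have on_s := sq_integral_le_measureReal_univ_mul (hf.restrict s)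
  have on_compl := sq_integral_le_measureReal_univ_mul (hf.restrict sᶜ)
  rw [setIntegral_compl_eq_neg (hf.integrable one_le_two) hf₀ hs, neg_sq] at on_compl
  rw [measureReal_restrict_apply_univ] at on_s on_compl
  rw [probReal_compl_eq_one_sub hs] at on_compl
  rw [← integral_add_compl hs hf.integrable_sq]
  have hs₁ : μ.real s ≤ 1 := measureReal_le_one
  linarith [mul_le_mul_of_nonneg_left on_s (sub_nonneg.2 hs₁),
    mul_le_mul_of_nonneg_left on_compl (measureReal_nonneg (μ := μ) (s := s))]

lemma norm_setIntegral_le_of_integral_eq_zero [IsProbabilityMeasure μ] (hg : Integrable g μ)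
    (hg₀ : ∫ x, g x ∂μ = 0) (hs : MeasurableSet s) {C : ℝ} (hC : ∀ᵐ x ∂μ, ‖g x‖ ≤ C) :
    ‖∫ x in s, g x ∂μ‖ ≤ C * μ.real s ∧ ‖∫ x in s, g x ∂μ‖ ≤ C * (1 - μ.real s) := by
  have bound (t : Set Ω) : ‖∫ x in t, g x ∂μ‖ ≤ C * μ.real t :=
    norm_setIntegral_le_of_norm_le_const_ae (measure_lt_top _ _) (ae_restrict_of_ae hC)
  refine ⟨bound s, ?_⟩
  have on_compl := bound sᶜ
  rwa [setIntegral_compl_eq_neg hg hg₀ hs, norm_neg, probReal_compl_eq_one_sub hs] at on_compl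

end CenteredFunctions

section SetMoment

variable {V : Type*} [NormedAddCommGroup V] [NormedSpace ℝ V] [MeasurableSpace V]

/-- The first moment of `μ` on `s` about the mean of `μ`. For a probability measure, its squared
norm divided by `μ s * (1 - μ s)` is the part of the variance that lies between `s` and `sᶜ`. -/
def setMoment (μ : Measure V) (s : Set V) : V := ∫ x in s, (x - ∫ y, y ∂μ) ∂μ

variable [CompleteSpace V] {μ : Measure V} [IsProbabilityMeasure μ]

lemma integral_sub_mean_eq_zero (hμ : Integrable (fun x : V ↦ x) μ) :
    ∫ x, (x - ∫ y, y ∂μ) ∂μ = 0 := by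
  rw [integral_sub hμ (integrable_const _), integral_const, probReal_univ, one_smul, sub_self]

lemma setMoment_compl (hμ : Integrable (fun x : V ↦ x) μ) {s : Set V} (hs : MeasurableSet s) :
    setMoment μ sᶜ = -setMoment μ s :=
  setIntegral_compl_eq_neg (hμ.sub (integrable_const _)) (integral_sub_mean_eq_zero hμ) hs

end SetMoment

section TwoMeans

variable {E : Type*} [NormedAddCommGroup E] [InnerProductSpace ℝ E] [CompleteSpace E]
  [MeasurableSpace E] {μ : Measure E} [IsProbabilityMeasure μ] {s : Set E}

lemma integral_inner_sub_mean_eq_zero (hμ : Integrable (fun x : E ↦ x) μ) (u : E) :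
    ∫ x, ⟪u, x - ∫ y, y ∂μ⟫ ∂μ = 0 := by
  have centered : Integrable (fun x ↦ x - ∫ y, y ∂μ) μ := hμ.sub (integrable_const _)
  rw [integral_inner centered, integral_sub_mean_eq_zero hμ, inner_zero_right]

lemma sq_norm_setMoment_le (hμ : MemLp (fun x : E ↦ x) 2 μ) (hs : MeasurableSet s) {c : ℝ}
    (hc₀ : 0 ≤ c) (hc : ∀ u : E, ∫ x, ⟪u, x - ∫ y, y ∂μ⟫ ^ 2 ∂μ ≤ c * ‖u‖ ^ 2) :
    ‖setMoment μ s‖ ^ 2 ≤ c * (μ.real s * (1 - μ.real s)) := by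
  set M := setMoment μ s with hM
  have centered : MemLp (fun x ↦ x - ∫ y, y ∂μ) 2 μ := hμ.sub (memLp_const _)
  have hi := centered.integrable one_le_two
  have on_s : ∫ x in s, ⟪M, x - ∫ y, y ∂μ⟫ ∂μ = ‖M‖ ^ 2 := by
    rw [integral_inner hi.integrableOn, ← setMoment, ← hM, real_inner_self_eq_norm_sq]
  have key := sq_setIntegral_le_of_integral_eq_zero (centered.const_inner M)
    (integral_inner_sub_mean_eq_zero (hμ.integrable one_le_two) M) hs
  rw [on_s] at key
  have hq : 0 ≤ μ.real s * (1 - μ.real s) :=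
    mul_nonneg measureReal_nonneg (sub_nonneg.2 measureReal_le_one)
  rcases (norm_nonneg M).eq_or_lt with hzero | hpos
  · rw [← hzero, zero_pow two_ne_zero]
    exact mul_nonneg hc₀ hq
  · refine le_of_mul_le_mul_right ?_ (pow_pos hpos 2)
    calc ‖M‖ ^ 2 * ‖M‖ ^ 2 = (‖M‖ ^ 2) ^ 2 := by ring
      _ ≤ _ := key
      _ ≤ μ.real s * (1 - μ.real s) * (c * ‖M‖ ^ 2) :=
        mul_le_mul_of_nonneg_left (hc M) hq
      _ = _ := by ring

lemma setIntegral_sq_norm_sub (hμ : MemLp (fun x : E ↦ x) 2 μ) (s : Set E) (a : E) :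
    ∫ x in s, ‖x - a‖ ^ 2 ∂μ = ∫ x in s, ‖x - ∫ y, y ∂μ‖ ^ 2 ∂μ
      - 2 * ⟪a - ∫ y, y ∂μ, setMoment μ s⟫ + μ.real s * ‖a - ∫ y, y ∂μ‖ ^ 2 := by
  set m := ∫ y, y ∂μ with hm
  have centered : MemLp (fun x ↦ x - m) 2 (μ.restrict s) := (hμ.restrict s).sub (memLp_const m)
  have hi := centered.integrable one_le_two
  have int_sq := centered.norm.integrable_sq
  have int_inner : Integrable (fun x ↦ 2 * ⟪a - m, x - m⟫) (μ.restrict s) :=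
    (hi.const_inner _).const_mul 2
  calc ∫ x in s, ‖x - a‖ ^ 2 ∂μ
      = ∫ x in s, (‖x - m‖ ^ 2 - 2 * ⟪a - m, x - m⟫ + ‖a - m‖ ^ 2) ∂μ := by
        congr with x
        rw [real_inner_comm, ← norm_sub_sq_real, sub_sub_sub_cancel_right]
    _ = _ := by
        rw [integral_add (f := fun x ↦ ‖x - m‖ ^ 2 - 2 * ⟪a - m, x - m⟫) (int_sq.sub int_inner)
          (integrable_const _), integral_sub int_sq int_inner, integral_const_mul,
          integral_inner hi, setMoment, hm, integral_const, measureReal_restrict_apply_univ,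
          smul_eq_mul]

lemma two_mul_inner_le_add_mul_sq_norm {F : Type*} [NormedAddCommGroup F] [InnerProductSpace ℝ F]
    {w v : F} {c t : ℝ} (hc : 0 ≤ c) (ht : 0 ≤ t) (hv : ‖v‖ ^ 2 ≤ c * t) :
    2 * ⟪w, v⟫ ≤ c + t * ‖w‖ ^ 2 := by
  refine le_of_sq_le_sq ?_ (by positivity)
  calc (2 * ⟪w, v⟫) ^ 2 = 4 * |⟪w, v⟫| ^ 2 := by rw [sq_abs]; ring
    _ ≤ 4 * (‖w‖ * ‖v‖) ^ 2 := by
      gcongr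
      exact abs_real_inner_le_norm w v
    _ = 4 * (‖w‖ ^ 2 * ‖v‖ ^ 2) := by rw [mul_pow]
    _ ≤ 4 * (‖w‖ ^ 2 * (c * t)) := by gcongr
    _ = 4 * c * (t * ‖w‖ ^ 2) := by ring
    _ ≤ (c + t * ‖w‖ ^ 2) ^ 2 := four_mul_le_sq_add c _

lemma variance_sub_le_setIntegral_add_setIntegral_compl (hμ : MemLp (fun x : E ↦ x) 2 μ)
    (hs : MeasurableSet s) {c : ℝ} (hc : 0 ≤ c)
    (hM : ‖setMoment μ s‖ ^ 2 ≤ c * (μ.real s * (1 - μ.real s))) (a b : E) :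
    ∫ x, ‖x - ∫ y, y ∂μ‖ ^ 2 ∂μ - c
      ≤ ∫ x in s, ‖x - a‖ ^ 2 ∂μ + ∫ x in sᶜ, ‖x - b‖ ^ 2 ∂μ := by
  have hsplit : ∫ x in s, ‖x - ∫ y, y ∂μ‖ ^ 2 ∂μ + ∫ x in sᶜ, ‖x - ∫ y, y ∂μ‖ ^ 2 ∂μ
      = ∫ x, ‖x - ∫ y, y ∂μ‖ ^ 2 ∂μ :=
    integral_add_compl hs (hμ.sub (memLp_const _)).norm.integrable_sq
  rw [setIntegral_sq_norm_sub hμ s a, setIntegral_sq_norm_sub hμ sᶜ b, ← hsplit,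
    setMoment_compl (hμ.integrable one_le_two) hs, probReal_compl_eq_one_sub hs, inner_neg_right]
  set M := setMoment μ s
  set q := μ.real s
  set u := a - ∫ y, y ∂μ
  set v := b - ∫ y, y ∂μ
  have hq : 0 ≤ q := measureReal_nonneg
  have hq₁ : 0 ≤ 1 - q := sub_nonneg.2 measureReal_le_one
  have between : 2 * ⟪u - v, M⟫ ≤ c + q * (1 - q) * ‖u - v‖ ^ 2 :=
    two_mul_inner_le_add_mul_sq_norm hc (mul_nonneg hq hq₁) hM
  have parallel_axis : q * ‖u‖ ^ 2 + (1 - q) * ‖v‖ ^ 2 - q * (1 - q) * ‖u - v‖ ^ 2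
      = ‖q • u + (1 - q) • v‖ ^ 2 := by
    rw [norm_sub_sq_real u v, norm_add_sq_real, norm_smul, norm_smul, real_inner_smul_left,
      real_inner_smul_right, mul_pow, mul_pow, Real.norm_eq_abs, Real.norm_eq_abs, sq_abs, sq_abs]
    ring
  rw [inner_sub_left] at between
  linarith [sq_nonneg ‖q • u + (1 - q) • v‖]

lemma variance_sub_le_integral_min_sq_norm [OpensMeasurableSpace E]
    (hμ : MemLp (fun x : E ↦ x) 2 μ) {c : ℝ} (hc : 0 ≤ c)
    (hM : ∀ s, MeasurableSet s → ‖setMoment μ s‖ ^ 2 ≤ c * (μ.real s * (1 - μ.real s)))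
    (a b : E) :
    ∫ x, ‖x - ∫ y, y ∂μ‖ ^ 2 ∂μ - c ≤ ∫ x, min (‖x - a‖ ^ 2) (‖x - b‖ ^ 2) ∂μ := by
  set s := {x | ‖x - a‖ ^ 2 ≤ ‖x - b‖ ^ 2}
  have hs : MeasurableSet s := (isClosed_le (by fun_prop) (by fun_prop)).measurableSet
  have int_sq (d : E) : Integrable (fun x ↦ ‖x - d‖ ^ 2) μ :=
    (hμ.sub (memLp_const d)).norm.integrable_sq
  have int_min : Integrable (fun x ↦ min (‖x - a‖ ^ 2) (‖x - b‖ ^ 2)) μ := (int_sq a).inf (int_sq b)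
  calc ∫ x, ‖x - ∫ y, y ∂μ‖ ^ 2 ∂μ - c
      ≤ ∫ x in s, ‖x - a‖ ^ 2 ∂μ + ∫ x in sᶜ, ‖x - b‖ ^ 2 ∂μ :=
        variance_sub_le_setIntegral_add_setIntegral_compl hμ hs hc (hM s hs) a b
    _ = ∫ x in s, min (‖x - a‖ ^ 2) (‖x - b‖ ^ 2) ∂μ
        + ∫ x in sᶜ, min (‖x - a‖ ^ 2) (‖x - b‖ ^ 2) ∂μ := by
      congr 1
      · exact setIntegral_congr_fun hs fun x hx ↦ (min_eq_left hx).symm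
      · exact setIntegral_congr_fun hs.compl fun x (hx : ¬‖x - a‖ ^ 2 ≤ ‖x - b‖ ^ 2) ↦
          (min_eq_right (not_le.1 hx).le).symm
    _ = ∫ x, min (‖x - a‖ ^ 2) (‖x - b‖ ^ 2) ∂μ := integral_add_compl hs int_min

end TwoMeans

section SelfSimilar

variable {ι X : Type*} [Fintype ι] [MeasurableSpace X] {p : ι → ℝ≥0} {f : ι → X → X}
  {μ : Measure X}

/-- Hutchinson's equation `μ = ∑ i, p i • (f i)_* μ`, which says that `μ` is self-similar for the
iterated function system `f` with weights `p`. -/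
def IsSelfSimilar (p : ι → ℝ≥0) (f : ι → X → X) (μ : Measure X) : Prop :=
  μ = ∑ i, p i • μ.map (f i)

namespace IsSelfSimilar

variable {V : Type*} [NormedAddCommGroup V]

lemma integrable_map (hμ : IsSelfSimilar p f μ) {g : X → V}
    (hg : Integrable g μ) {i : ι} (hi : p i ≠ 0) : Integrable g (μ.map (f i)) := by
  have hsum : Integrable g (∑ i, p i • μ.map (f i)) := hμ ▸ hg
  have hsmul := (integrable_finsetSum_measure (s := Finset.univ)).1 hsum i (Finset.mem_univ i)
  exact (integrable_smul_measure (c := (p i : ℝ≥0∞)) (ENNReal.coe_ne_zero.2 hi)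
    ENNReal.coe_ne_top).1 hsmul

lemma integral_eq [NormedSpace ℝ V] (hμ : IsSelfSimilar p f μ) (hf : ∀ i, Measurable (f i))
    {g : X → V} (hg : Integrable g μ) : ∫ x, g x ∂μ = ∑ i, p i • ∫ x, g (f i x) ∂μ := by
  have hsum : Integrable g (∑ i, p i • μ.map (f i)) := hμ ▸ hg
  have hg_map := (integrable_finsetSum_measure (s := Finset.univ)).1 hsum
  conv_lhs => rw [hμ, integral_finsetSum_measure hg_map]
  refine Finset.sum_congr rfl fun i _ ↦ ?_
  rw [integral_smul_nnreal_measure]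
  rcases eq_or_ne (p i) 0 with hi₀ | hi₀
  · rw [hi₀, zero_smul, zero_smul]
  · rw [integral_map (hf i).aemeasurable (hμ.integrable_map hg hi₀).aestronglyMeasurable]

lemma setIntegral_eq [NormedSpace ℝ V] (hμ : IsSelfSimilar p f μ) (hf : ∀ i, Measurable (f i))
    {g : X → V} (hg : Integrable g μ) {s : Set X} (hs : MeasurableSet s) :
    ∫ x in s, g x ∂μ = ∑ i, p i • ∫ x in f i ⁻¹' s, g (f i x) ∂μ := by
  rw [← integral_indicator hs, hμ.integral_eq hf (hg.indicator hs)]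
  refine Finset.sum_congr rfl fun i _ ↦ ?_
  rw [← integral_indicator (hf i hs)]
  rfl

lemma measureReal_eq [IsFiniteMeasure μ] (hμ : IsSelfSimilar p f μ) (hf : ∀ i, Measurable (f i))
    {s : Set X} (hs : MeasurableSet s) : μ.real s = ∑ i, p i * μ.real (f i ⁻¹' s) := by
  have h := hμ.setIntegral_eq hf (integrable_const (1 : ℝ)) hs
  simpa only [setIntegral_const, smul_eq_mul, mul_one, NNReal.smul_def] using h

lemma sum_weight [IsProbabilityMeasure μ] (hμ : IsSelfSimilar p f μ)
    (hf : ∀ i, Measurable (f i)) : ∑ i, (p i : ℝ) = 1 := by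
  simpa using (hμ.measureReal_eq hf MeasurableSet.univ).symm

/- No moment of `φ` is assumed, so the equation is integrated against the bounded function
`arctan ∘ φ`; it shows that `arctan (φ x)` and `arctan (c * φ x)` have equal integrals. -/
lemma ae_eq_zero_of_comp_le [IsProbabilityMeasure μ] (hμ : IsSelfSimilar p f μ)
    (hf : ∀ i, Measurable (f i)) {φ : X → ℝ} (hφ : Measurable φ) (hφ₀ : ∀ x, 0 ≤ φ x) {c : ℝ}
    (hc : c < 1) (hφc : ∀ i x, φ (f i x) ≤ c * φ x) : φ =ᵐ[μ] 0 := by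
  have int_arctan {ψ : X → ℝ} (hψ : Measurable ψ) : Integrable (fun x ↦ Real.arctan (ψ x)) μ :=
    .of_bound (Real.measurable_arctan.comp hψ).aestronglyMeasurable (Real.pi / 2)
      (.of_forall fun x ↦
        abs_le.2 ⟨(Real.neg_pi_div_two_lt_arctan _).le, (Real.arctan_lt_pi_div_two _).le⟩)
  have int_φ := int_arctan hφ
  have int_cφ := int_arctan (hφ.const_mul c)
  have contr : ∫ x, Real.arctan (φ x) ∂μ ≤ ∫ x, Real.arctan (c * φ x) ∂μ := by
    calc ∫ x, Real.arctan (φ x) ∂μ = ∑ i, p i • ∫ x, Real.arctan (φ (f i x)) ∂μ :=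
          hμ.integral_eq hf int_φ
      _ ≤ ∑ i, p i • ∫ x, Real.arctan (c * φ x) ∂μ := by
        gcongr with i _
        · exact int_arctan (hφ.comp (hf i))
        · exact fun x ↦ Real.arctan_mono (hφc i x)
      _ = ∫ x, Real.arctan (c * φ x) ∂μ := by
        simp only [NNReal.smul_def, smul_eq_mul, ← Finset.sum_mul]
        rw [hμ.sum_weight hf, one_mul]
  have arctan_le (x : X) : Real.arctan (c * φ x) ≤ Real.arctan (φ x) :=
    Real.arctan_mono (mul_le_of_le_one_left (hφ₀ x) hc.le)
  have ae_eq := (integral_eq_iff_of_ae_le int_cφ int_φ (.of_forall arctan_le)).1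
    ((integral_mono int_cφ int_φ arctan_le).antisymm contr)
  filter_upwards [ae_eq] with x hx
  have : c * φ x = φ x := Real.arctan_injective hx
  by_contra h
  exact hc.ne (mul_right_cancel₀ h (by rw [this, one_mul]))

end IsSelfSimilar

lemma IsSelfSimilar.ae_mem_of_mapsTo {X : Type*} [PseudoMetricSpace X] [MeasurableSpace X]
    [BorelSpace X] {f : ι → X → X} {μ : Measure X} [IsProbabilityMeasure μ]
    (hμ : IsSelfSimilar p f μ) {K : ℝ≥0} (hK : K < 1) (hf : ∀ i, LipschitzWith K (f i))
    {A : Set X} (hA : IsClosed A) (hA₀ : A.Nonempty) (hfA : ∀ i, MapsTo (f i) A A) :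
    ∀ᵐ x ∂μ, x ∈ A := by
  have infDist_le (i : ι) (x : X) : Metric.infDist (f i x) A ≤ K * Metric.infDist x A := by
    have : Nonempty A := hA₀.to_subtype
    rw [Metric.infDist_eq_iInf (x := x), Real.mul_iInf_of_nonneg K.coe_nonneg]
    exact le_ciInf fun y ↦
      (Metric.infDist_le_dist_of_mem (hfA i y.2)).trans ((hf i).dist_le_mul x y)
  have h := hμ.ae_eq_zero_of_comp_le (fun i ↦ (hf i).continuous.measurable)
    (Metric.continuous_infDist_pt A).measurable (fun x ↦ Metric.infDist_nonneg) hK infDist_le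
  filter_upwards [h] with x hx
  exact (hA.mem_iff_infDist_zero hA₀).2 hx

end SelfSimilar

section HomotheticSystem

variable {ι V : Type*} [NormedAddCommGroup V] [NormedSpace ℝ V] {f : ι → V → V} {m : V}
  {d : ι → V} {r : ℝ}

lemma lipschitzWith_of_sub_eq_smul (hf : ∀ i x, f i x - m = r • (x - m + d i)) (i : ι) :
    LipschitzWith ‖r‖₊ (f i) := by
  refine LipschitzWith.of_dist_le_mul fun x y ↦ ?_
  rw [dist_eq_norm, dist_eq_norm, ← sub_sub_sub_cancel_right _ _ m, hf, hf, ← smul_sub, norm_smul,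
    add_sub_add_right_eq_sub, sub_sub_sub_cancel_right, coe_nnnorm]

variable [MeasurableSpace V] [BorelSpace V]

lemma measurable_of_sub_eq_smul (hf : ∀ i x, f i x - m = r • (x - m + d i)) (i : ι) :
    Measurable (f i) :=
  (lipschitzWith_of_sub_eq_smul hf i).continuous.measurable

variable [CompleteSpace V] [Fintype ι] {p : ι → ℝ≥0} {μ : Measure V} [IsProbabilityMeasure μ]

namespace IsSelfSimilar

lemma integral_id_eq (hμ : IsSelfSimilar p f μ) (hf : ∀ i x, f i x - m = r • (x - m + d i))
    (hr : r ≠ 1) (hd : ∑ i, p i • d i = 0) (hint : Integrable (fun x : V ↦ x) μ) :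
    ∫ x, x ∂μ = m := by
  have hmeas := measurable_of_sub_eq_smul hf
  have centered : Integrable (fun x ↦ x - m) μ := hint.sub (integrable_const m)
  set I := ∫ x, (x - m) ∂μ with hI
  have fixed : I = r • I := by
    calc I = ∑ i, p i • ∫ x, (f i x - m) ∂μ := hμ.integral_eq hmeas centered
      _ = ∑ i, p i • (r • (I + d i)) := by
        refine Finset.sum_congr rfl fun i _ ↦ ?_
        simp_rw [hf, integral_smul]
        rw [integral_add centered (integrable_const _), integral_const, probReal_univ, one_smul]
      _ = r • ((∑ i, (p i : ℝ)) • I + ∑ i, p i • d i) := by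
        simp only [NNReal.smul_def, smul_add, Finset.smul_sum, Finset.sum_smul,
          Finset.sum_add_distrib, smul_comm r]
      _ = r • I := by rw [hμ.sum_weight hmeas, one_smul, hd, add_zero]
  have hI₀ : I = 0 := by
    have : (1 - r) • I = 0 := by rw [sub_smul, one_smul, ← fixed, sub_self]
    exact (smul_eq_zero.1 this).resolve_left (sub_ne_zero.2 hr.symm)
  rw [hI, integral_sub hint (integrable_const m), integral_const, probReal_univ, one_smul] at hI₀
  exact sub_eq_zero.1 hI₀

lemma setMoment_eq (hμ : IsSelfSimilar p f μ)
    (hf : ∀ i x, f i x - ∫ y, y ∂μ = r • (x - ∫ y, y ∂μ + d i))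
    (hint : Integrable (fun x : V ↦ x) μ) {s : Set V} (hs : MeasurableSet s) :
    setMoment μ s
      = r • ∑ i, p i • (setMoment μ (f i ⁻¹' s) + μ.real (f i ⁻¹' s) • d i) := by
  have hmeas := measurable_of_sub_eq_smul hf
  have centered : Integrable (fun x ↦ x - ∫ y, y ∂μ) μ := hint.sub (integrable_const _)
  rw [setMoment, hμ.setIntegral_eq hmeas centered hs, Finset.smul_sum]
  refine Finset.sum_congr rfl fun i _ ↦ ?_
  simp_rw [hf, integral_smul]
  rw [integral_add centered.integrableOn (integrable_const _), setIntegral_const, smul_comm,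
    setMoment]

lemma integral_sq_inner_eq {E : Type*} [NormedAddCommGroup E] [InnerProductSpace ℝ E]
    [CompleteSpace E] [MeasurableSpace E] [BorelSpace E] {f : ι → E → E} {d : ι → E}
    {μ : Measure E} [IsProbabilityMeasure μ] (hμ : IsSelfSimilar p f μ)
    (hf : ∀ i x, f i x - ∫ y, y ∂μ = r • (x - ∫ y, y ∂μ + d i))
    (hint : MemLp (fun x : E ↦ x) 2 μ) (u : E) :
    (1 - r ^ 2) * ∫ x, ⟪u, x - ∫ y, y ∂μ⟫ ^ 2 ∂μ = r ^ 2 * ∑ i, p i * ⟪u, d i⟫ ^ 2 := by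
  have hmeas := measurable_of_sub_eq_smul hf
  have centered : MemLp (fun x ↦ x - ∫ y, y ∂μ) 2 μ := hint.sub (memLp_const _)
  have int_inner : MemLp (fun x ↦ ⟪u, x - ∫ y, y ∂μ⟫) 2 μ := centered.const_inner u
  have mean_zero := integral_inner_sub_mean_eq_zero (hint.integrable one_le_two) u
  set Q := ∫ x, ⟪u, x - ∫ y, y ∂μ⟫ ^ 2 ∂μ
  have cell (i : ι) : ∫ x, ⟪u, f i x - ∫ y, y ∂μ⟫ ^ 2 ∂μ = r ^ 2 * (Q + ⟪u, d i⟫ ^ 2) := by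
    have int_lin : Integrable (fun x ↦ 2 * ⟪u, d i⟫ * ⟪u, x - ∫ y, y ∂μ⟫) μ :=
      (int_inner.integrable one_le_two).const_mul _
    calc ∫ x, ⟪u, f i x - ∫ y, y ∂μ⟫ ^ 2 ∂μ
        = ∫ x, r ^ 2 * (⟪u, x - ∫ y, y ∂μ⟫ ^ 2 + 2 * ⟪u, d i⟫ * ⟪u, x - ∫ y, y ∂μ⟫
            + ⟪u, d i⟫ ^ 2) ∂μ := by
          congr with x
          rw [hf, inner_smul_right, inner_add_right]
          ring
      _ = _ := by
          rw [integral_const_mul, integral_add (f := fun x ↦ ⟪u, x - ∫ y, y ∂μ⟫ ^ 2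
            + 2 * ⟪u, d i⟫ * ⟪u, x - ∫ y, y ∂μ⟫) (int_inner.integrable_sq.add int_lin)
            (integrable_const _), integral_add int_inner.integrable_sq int_lin,
            integral_const_mul, mean_zero, integral_const, probReal_univ, one_smul, mul_zero,
            add_zero]
  have hQ : Q = r ^ 2 * (Q + ∑ i, p i * ⟪u, d i⟫ ^ 2) := by
    calc Q = ∑ i, p i • ∫ x, ⟪u, f i x - ∫ y, y ∂μ⟫ ^ 2 ∂μ :=
          hμ.integral_eq hmeas int_inner.integrable_sq
      _ = r ^ 2 * ((∑ i, (p i : ℝ)) * Q + ∑ i, p i * ⟪u, d i⟫ ^ 2) := by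
        simp only [cell, NNReal.smul_def, smul_eq_mul, Finset.sum_mul, ← Finset.sum_add_distrib,
          Finset.mul_sum]
        exact Finset.sum_congr rfl fun i _ ↦ by ring
      _ = _ := by rw [hμ.sum_weight hmeas, one_mul]
  linarith

end IsSelfSimilar

end HomotheticSystem

section Carpet

/-- The weights `1 / 8, 1 / 8, 3 / 8, 3 / 8` of the four cells of the carpet. -/
def carpetWeight : Fin 4 → ℝ≥0 := ![1 / 8, 1 / 8, 3 / 8, 3 / 8]

/-- The mean of the carpet measure, see `carpetEq.integral_id`. -/
def carpetMean : E2 := pt (1 / 2) (3 / 4)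

/-- The digits of the carpet about its mean: `S i` sends `carpetMean + y` to
`carpetMean + (y + carpetDigit i) / 3`. -/
def carpetDigit : Fin 4 → E2 := ![pt (-1) (-3 / 2), pt 1 (-3 / 2), pt (-1) (1 / 2), pt 1 (1 / 2)]

@[simp] lemma pt_apply_zero (a b : ℝ) : pt a b 0 = a := rfl

@[simp] lemma pt_apply_one (a b : ℝ) : pt a b 1 = b := rfl

lemma sq_norm_eq_coord (v : E2) : ‖v‖ ^ 2 = v 0 ^ 2 + v 1 ^ 2 := by
  simp [EuclideanSpace.norm_sq_eq]

lemma S_sub_carpetMean (i : Fin 4) (x : E2) :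
    S i x - carpetMean = (3⁻¹ : ℝ) • (x - carpetMean + carpetDigit i) := by
  ext k
  fin_cases i <;> fin_cases k <;>
    simp only [S, carpetMean, carpetDigit, Fin.reduceFinMk, Fin.zero_eta, Fin.mk_one,
      Matrix.cons_val, PiLp.sub_apply, PiLp.add_apply, PiLp.smul_apply, pt_apply_zero, pt_apply_one,
      smul_eq_mul] <;>
    ring

lemma measurable_S (i : Fin 4) : Measurable (S i) := measurable_of_sub_eq_smul S_sub_carpetMean i

lemma mapsTo_S_unitSq (i : Fin 4) : MapsTo (S i) unitSq unitSq := by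
  intro x hx k
  obtain ⟨h₀, h₀'⟩ := hx 0
  obtain ⟨h₁, h₁'⟩ := hx 1
  fin_cases i <;> fin_cases k <;>
    simp only [S, Fin.zero_eta, Fin.mk_one, pt_apply_zero, pt_apply_one, mem_Icc] <;>
    constructor <;> linarith

lemma isClosed_unitSq : IsClosed unitSq := by
  simp only [unitSq, ofPred_forall]
  exact isClosed_iInter fun i ↦ isClosed_Icc.preimage (by fun_prop)

lemma abs_sub_carpetMean_le {x : E2} (hx : x ∈ unitSq) : |(x - carpetMean) 0| ≤ 1 / 2 := by
  obtain ⟨h₀, h₁⟩ := hx 0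
  simp only [carpetMean, PiLp.sub_apply, pt_apply_zero, abs_le]
  constructor <;> linarith

lemma abs_carpetDigit_zero (i : Fin 4) : |carpetDigit i 0| = 1 := by
  fin_cases i <;> simp [carpetDigit]

lemma coe_carpetWeight_nonneg (i : Fin 4) : (0 : ℝ) ≤ carpetWeight i := (carpetWeight i).coe_nonneg

lemma sum_carpetWeight_mul (z : Fin 4 → ℝ) :
    ∑ i, carpetWeight i * z i = 1 / 8 * (z 0 + z 1) + 3 / 8 * (z 2 + z 3) := by
  simp only [Fin.sum_univ_four, carpetWeight, Matrix.cons_val]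
  push_cast
  ring

lemma sum_carpetWeight : ∑ i, (carpetWeight i : ℝ) = 1 := by
  simpa only [mul_one] using (sum_carpetWeight_mul fun _ ↦ 1).trans (by norm_num)

lemma sum_carpetWeight_smul_carpetDigit : ∑ i, carpetWeight i • carpetDigit i = 0 := by
  ext k
  simp only [NNReal.smul_def, WithLp.ofLp_sum, WithLp.ofLp_smul, Finset.sum_apply, Pi.smul_apply,
    smul_eq_mul, sum_carpetWeight_mul, carpetDigit, Matrix.cons_val]
  fin_cases k <;> norm_num

lemma sum_carpetWeight_mul_sq_inner_carpetDigit (u : E2) :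
    ∑ i, carpetWeight i * ⟪u, carpetDigit i⟫ ^ 2 = u 0 ^ 2 + 3 / 4 * u 1 ^ 2 := by
  simp only [sum_carpetWeight_mul, carpetDigit, Matrix.cons_val, PiLp.inner_apply, Fin.sum_univ_two,
    pt_apply_zero, pt_apply_one, RCLike.inner_apply, conj_trivial]
  ring

namespace carpetEq

variable {P : Measure E2}

lemma isSelfSimilar (hP : carpetEq P) : IsSelfSimilar carpetWeight S P := by
  rw [IsSelfSimilar, Fin.sum_univ_four]
  have h₁ : ((1 / 8 : ℝ≥0) : ℝ≥0∞) = 1 / 8 := by simp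
  have h₃ : ((3 / 8 : ℝ≥0) : ℝ≥0∞) = 3 / 8 := by simp
  rw [carpetEq, ← h₁, ← h₃] at hP
  exact hP

variable [IsProbabilityMeasure P]

lemma ae_mem_unitSq (hP : carpetEq P) : ∀ᵐ x ∂P, x ∈ unitSq :=
  hP.isSelfSimilar.ae_mem_of_mapsTo (by norm_num)
    (lipschitzWith_of_sub_eq_smul S_sub_carpetMean) isClosed_unitSq ⟨0, fun _ ↦ by simp⟩
    mapsTo_S_unitSq

lemma memLp_id (hP : carpetEq P) : MemLp (fun x : E2 ↦ x) 2 P :=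
  MemLp.of_eval_piLp fun i ↦
    memLp_of_bounded (hP.ae_mem_unitSq.mono fun x hx ↦ hx i) (by fun_prop) 2

lemma integrable_id (hP : carpetEq P) : Integrable (fun x : E2 ↦ x) P :=
  hP.memLp_id.integrable one_le_two

lemma integral_id (hP : carpetEq P) : ∫ x, x ∂P = carpetMean :=
  hP.isSelfSimilar.integral_id_eq S_sub_carpetMean (by norm_num) sum_carpetWeight_smul_carpetDigit
    hP.integrable_id

lemma integral_sq_inner_sub_mean (hP : carpetEq P) (u : E2) :
    ∫ x, ⟪u, x - carpetMean⟫ ^ 2 ∂P = 1 / 8 * u 0 ^ 2 + 3 / 32 * u 1 ^ 2 := by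
  have h := hP.isSelfSimilar.integral_sq_inner_eq (f := S) (d := carpetDigit) (r := 3⁻¹)
    (by simpa only [hP.integral_id] using S_sub_carpetMean) hP.memLp_id u
  rw [sum_carpetWeight_mul_sq_inner_carpetDigit, hP.integral_id] at h
  linarith

lemma integral_sq_coord_zero (hP : carpetEq P) : ∫ x, (x - carpetMean) 0 ^ 2 ∂P = 1 / 8 := by
  simpa [EuclideanSpace.inner_single_left] using
    hP.integral_sq_inner_sub_mean (EuclideanSpace.single 0 1)

lemma integral_sq_coord_one (hP : carpetEq P) : ∫ x, (x - carpetMean) 1 ^ 2 ∂P = 3 / 32 := by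
  simpa [EuclideanSpace.inner_single_left] using
    hP.integral_sq_inner_sub_mean (EuclideanSpace.single 1 1)

lemma memLp_coord (hP : carpetEq P) (k : Fin 2) : MemLp (fun x ↦ (x - carpetMean) k) 2 P :=
  (hP.memLp_id.sub (memLp_const carpetMean)).eval_piLp k

lemma integral_sq_norm_sub_mean (hP : carpetEq P) :
    ∫ x, ‖x - carpetMean‖ ^ 2 ∂P = 7 / 32 := by
  simp_rw [sq_norm_eq_coord]
  rw [integral_add (hP.memLp_coord 0).integrable_sq (hP.memLp_coord 1).integrable_sq,
    hP.integral_sq_coord_zero, hP.integral_sq_coord_one]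
  norm_num

lemma abs_setMoment_zero_add_sq_le (hP : carpetEq P) {s : Set E2} (hs : MeasurableSet s) :
    |setMoment P s 0| + setMoment P s 0 ^ 2 + 4 * setMoment P s 1 ^ 2
      ≤ P.real s * (1 - P.real s) := by
  have coord_eq : setMoment P s 0 = ∫ x in s, (x - carpetMean) 0 ∂P := by
    rw [setMoment, hP.integral_id]
    exact eval_integral_piLp (fun k ↦ ((hP.memLp_coord k).restrict s).integrable one_le_two) 0
  have coord_mean : ∫ x, (x - carpetMean) 0 ∂P = 0 := by
    rw [← eval_integral_piLp (fun k ↦ (hP.memLp_coord k).integrable one_le_two) 0,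
      ← hP.integral_id, integral_sub_mean_eq_zero hP.integrable_id]
    rfl
  obtain ⟨abs_le, abs_le_compl⟩ := norm_setIntegral_le_of_integral_eq_zero
    ((hP.memLp_coord 0).integrable one_le_two) coord_mean hs
    (hP.ae_mem_unitSq.mono fun x ↦ abs_sub_carpetMean_le)
  rw [← coord_eq, Real.norm_eq_abs] at abs_le abs_le_compl
  have covariance : ‖setMoment P s‖ ^ 2 ≤ 1 / 8 * (P.real s * (1 - P.real s)) := by
    refine sq_norm_setMoment_le hP.memLp_id hs (by norm_num) fun u ↦ ?_
    rw [hP.integral_id, hP.integral_sq_inner_sub_mean, sq_norm_eq_coord]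
    linarith [sq_nonneg (u 1)]
  rw [sq_norm_eq_coord, ← sq_abs (setMoment P s 0)] at covariance
  rw [← sq_abs (setMoment P s 0)]
  linarith [mul_nonneg (sub_nonneg.2 abs_le) (sub_nonneg.2 abs_le_compl),
    sq_nonneg |setMoment P s 0|]

end carpetEq

/- For the weights, `1`, the two coordinates of `carpetDigit` and their product are orthogonal, with
squared norms `1`, `1`, `3 / 4` and `3 / 4`. -/
lemma bessel_carpetDigit (W : Fin 4 → ℝ) :
    (∑ i, carpetWeight i * (W i * carpetDigit i 0)) ^ 2
        + 4 / 3 * (∑ i, carpetWeight i * (W i * carpetDigit i 1)) ^ 2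
      ≤ ∑ i, carpetWeight i * W i ^ 2 - (∑ i, carpetWeight i * W i) ^ 2 := by
  have product_sq_nonneg := sq_nonneg
    (∑ i, carpetWeight i * (W i * (carpetDigit i 0 * carpetDigit i 1)))
  simp only [sum_carpetWeight_mul, carpetDigit, Matrix.cons_val, pt_apply_zero, pt_apply_one]
    at product_sq_nonneg ⊢
  linarith

lemma abs_sum_carpetWeight_mul_carpetDigit_zero_le {W : Fin 4 → ℝ} (hW : ∀ i, W i ∈ Icc 0 1) :
    |∑ i, carpetWeight i * (W i * carpetDigit i 0)| ≤ 1 / 2 := by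
  simp only [sum_carpetWeight_mul, carpetDigit, Matrix.cons_val, pt_apply_zero, abs_le]
  constructor <;> linarith [(hW 0).1, (hW 1).1, (hW 2).1, (hW 3).1, (hW 0).2, (hW 1).2,
    (hW 2).2, (hW 3).2]

lemma sq_sum_carpetWeight_mul_le (z : Fin 4 → ℝ) :
    (∑ i, carpetWeight i * z i) ^ 2 ≤ ∑ i, carpetWeight i * z i ^ 2 :=
  Real.pow_arith_mean_le_arith_mean_pow_of_even _ _ _ (fun i _ ↦ coe_carpetWeight_nonneg i)
    sum_carpetWeight even_two

lemma abs_sum_carpetWeight_mul_le (z : Fin 4 → ℝ) :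
    |∑ i, carpetWeight i * z i| ≤ ∑ i, carpetWeight i * |z i| := by
  refine (Finset.abs_sum_le_sum_abs _ _).trans_eq (Finset.sum_congr rfl fun i _ ↦ ?_)
  rw [abs_mul, abs_of_nonneg (coe_carpetWeight_nonneg i)]

lemma abs_sum_add_sq_sum_le (y z : Fin 4 → ℝ) :
    |∑ i, carpetWeight i * y i| + (∑ i, carpetWeight i * y i) ^ 2
        + 4 * (∑ i, carpetWeight i * z i) ^ 2
      ≤ ∑ i, carpetWeight i * (|y i| + y i ^ 2 + 4 * z i ^ 2) := by
  calc |∑ i, carpetWeight i * y i| + (∑ i, carpetWeight i * y i) ^ 2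
        + 4 * (∑ i, carpetWeight i * z i) ^ 2
      ≤ ∑ i, carpetWeight i * |y i| + ∑ i, carpetWeight i * y i ^ 2
        + 4 * ∑ i, carpetWeight i * z i ^ 2 := by
        gcongr
        · exact abs_sum_carpetWeight_mul_le y
        · exact sq_sum_carpetWeight_mul_le y
        · exact sq_sum_carpetWeight_mul_le z
    _ = ∑ i, carpetWeight i * (|y i| + y i ^ 2 + 4 * z i ^ 2) := by
        simp only [sum_carpetWeight_mul]
        ring

lemma sq_norm_sum_carpetWeight_smul_le {W : Fin 4 → ℝ} (hW : ∀ i, W i ∈ Icc 0 1) {M : Fin 4 → E2}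
    (hM : ∀ i, |M i 0| + M i 0 ^ 2 + 4 * M i 1 ^ 2 ≤ W i * (1 - W i)) :
    ‖∑ i, carpetWeight i • (M i + W i • carpetDigit i)‖ ^ 2
      ≤ (∑ i, carpetWeight i * W i) * (1 - ∑ i, carpetWeight i * W i) := by
  set A := ∑ i, carpetWeight i * (W i * carpetDigit i 0) with hA
  set C := ∑ i, carpetWeight i * (W i * carpetDigit i 1) with hC
  set B := ∑ i, carpetWeight i * M i 0 with hB
  set G := ∑ i, carpetWeight i * M i 1 with hG
  have coord : ‖∑ i, carpetWeight i • (M i + W i • carpetDigit i)‖ ^ 2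
      = (B + A) ^ 2 + (G + C) ^ 2 := by
    simp [sq_norm_eq_coord, NNReal.smul_def, Finset.sum_add_distrib, hA, hB, hC, hG]
  have cells : |B| + B ^ 2 + 4 * G ^ 2
      ≤ ∑ i, carpetWeight i * W i - ∑ i, carpetWeight i * W i ^ 2 := by
    calc |B| + B ^ 2 + 4 * G ^ 2
        ≤ ∑ i, carpetWeight i * (|M i 0| + M i 0 ^ 2 + 4 * M i 1 ^ 2) := abs_sum_add_sq_sum_le _ _
      _ ≤ ∑ i, carpetWeight i * (W i * (1 - W i)) := by
          gcongr with i
          exact hM i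
      _ = ∑ i, carpetWeight i * W i - ∑ i, carpetWeight i * W i ^ 2 := by
          simp only [sum_carpetWeight_mul]
          ring
  have cross_zero : 2 * A * B ≤ |B| := by
    calc 2 * A * B ≤ |2 * A * B| := le_abs_self _
      _ = 2 * |A| * |B| := by rw [abs_mul, abs_mul, abs_two]
      _ ≤ |B| := by nlinarith [abs_sum_carpetWeight_mul_carpetDigit_zero_le hW, abs_nonneg B]
  have cross_one : (G + C) ^ 2 ≤ 4 * G ^ 2 + 4 / 3 * C ^ 2 := by nlinarith [sq_nonneg (3 * G - C)]
  rw [coord]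
  linarith [bessel_carpetDigit W]

namespace carpetEq

variable {P : Measure E2} [IsProbabilityMeasure P]

lemma sq_norm_setMoment_le_div_nine (hP : carpetEq P) {s : Set E2} (hs : MeasurableSet s) :
    ‖setMoment P s‖ ^ 2 ≤ 1 / 9 * (P.real s * (1 - P.real s)) := by
  have hS : ∀ i x, S i x - ∫ y, y ∂P = (3⁻¹ : ℝ) • (x - ∫ y, y ∂P + carpetDigit i) := by
    simpa only [hP.integral_id] using S_sub_carpetMean
  rw [hP.isSelfSimilar.setMoment_eq hS hP.integrable_id hs,
    hP.isSelfSimilar.measureReal_eq measurable_S hs, norm_smul, mul_pow]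
  rw [show ‖(3⁻¹ : ℝ)‖ ^ 2 = 1 / 9 by norm_num]
  refine mul_le_mul_of_nonneg_left ?_ (by norm_num)
  exact sq_norm_sum_carpetWeight_smul_le (W := fun i ↦ P.real (S i ⁻¹' s))
    (M := fun i ↦ setMoment P (S i ⁻¹' s)) (fun i ↦ ⟨measureReal_nonneg, measureReal_le_one⟩)
    fun i ↦ hP.abs_setMoment_zero_add_sq_le (measurable_S i hs)

lemma le_integral_min_sq_norm (hP : carpetEq P) (a b : E2) :
    31 / 288 ≤ ∫ x, min (‖x - a‖ ^ 2) (‖x - b‖ ^ 2) ∂P := by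
  have h := variance_sub_le_integral_min_sq_norm hP.memLp_id (by norm_num)
    (fun s ↦ hP.sq_norm_setMoment_le_div_nine) a b
  rw [hP.integral_id, hP.integral_sq_norm_sub_mean] at h
  linarith

lemma integrable_sq_abs_coord_zero_sub (hP : carpetEq P) :
    Integrable (fun x ↦ (|(x - carpetMean) 0| - 1 / 3) ^ 2) P :=
  ((hP.memLp_coord 0).abs.sub (memLp_const (1 / 3 : ℝ))).integrable_sq

lemma integral_sq_abs_coord_zero_sub (hP : carpetEq P) :
    ∫ x, (|(x - carpetMean) 0| - 1 / 3) ^ 2 ∂P = 1 / 72 := by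
  have cell (i : Fin 4) : ∫ x, (|(S i x - carpetMean) 0| - 1 / 3) ^ 2 ∂P = 1 / 72 := by
    calc ∫ x, (|(S i x - carpetMean) 0| - 1 / 3) ^ 2 ∂P
        = ∫ x, 9⁻¹ * (x - carpetMean) 0 ^ 2 ∂P := by
          refine integral_congr_ae (hP.ae_mem_unitSq.mono fun x hx ↦ ?_)
          obtain ⟨hx₁, hx₂⟩ := abs_le.1 (abs_sub_carpetMean_le hx)
          simp only [S_sub_carpetMean, PiLp.smul_apply, PiLp.add_apply, smul_eq_mul]
          rcases eq_or_eq_neg_of_abs_eq (abs_carpetDigit_zero i) with h | h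
          · rw [h, abs_of_nonneg (by linarith)]
            ring
          · rw [h, abs_of_nonpos (by linarith)]
            ring
      _ = 1 / 72 := by
          rw [integral_const_mul, hP.integral_sq_coord_zero]
          norm_num
  rw [hP.isSelfSimilar.integral_eq measurable_S hP.integrable_sq_abs_coord_zero_sub]
  simp only [cell, NNReal.smul_def, smul_eq_mul, ← Finset.sum_mul]
  rw [sum_carpetWeight, one_mul]

end carpetEq

lemma min_sq_norm_sub_eq (x : E2) :
    min (‖x - pt (1 / 6) (3 / 4)‖ ^ 2) (‖x - pt (5 / 6) (3 / 4)‖ ^ 2)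
      = (|(x - carpetMean) 0| - 1 / 3) ^ 2 + (x - carpetMean) 1 ^ 2 := by
  have hx (c : ℝ) : ‖x - pt (1 / 2 + c) (3 / 4)‖ ^ 2
      = ((x - carpetMean) 0 - c) ^ 2 + (x - carpetMean) 1 ^ 2 := by
    simp [sq_norm_eq_coord, carpetMean, sub_sub]
  rw [show (1 / 6 : ℝ) = 1 / 2 + -(1 / 3) by norm_num, show (5 / 6 : ℝ) = 1 / 2 + 1 / 3 by norm_num,
    hx, hx, min_add_add_right]
  congr 1
  rcases le_total 0 ((x - carpetMean) 0) with h | h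
  · rw [abs_of_nonneg h, min_eq_right (by nlinarith)]
  · rw [abs_of_nonpos h, min_eq_left (by nlinarith)]
    ring

namespace carpetEq

variable {P : Measure E2} [IsProbabilityMeasure P]

lemma integral_min_sq_norm_eq (hP : carpetEq P) :
    ∫ x, min (‖x - pt (1 / 6) (3 / 4)‖ ^ 2) (‖x - pt (5 / 6) (3 / 4)‖ ^ 2) ∂P = 31 / 288 := by
  simp_rw [min_sq_norm_sub_eq]
  rw [integral_add hP.integrable_sq_abs_coord_zero_sub (hP.memLp_coord 1).integrable_sq,
    hP.integral_sq_abs_coord_zero_sub, hP.integral_sq_coord_one]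
  norm_num

end carpetEq

end Carpet

lemma exists_eq_pair_of_card_le_two {α : Type*} [DecidableEq α] {s : Finset α} (hs : s.Nonempty)
    (hcard : s.card ≤ 2) : ∃ a b, s = {a, b} := by
  have hpos := hs.card_pos
  interval_cases h : s.card
  · obtain ⟨a, rfl⟩ := Finset.card_eq_one.1 h
    exact ⟨a, a, by rw [Finset.pair_eq_singleton]⟩
  · obtain ⟨a, b, -, rfl⟩ := Finset.card_eq_two.1 h
    exact ⟨a, b, rfl⟩

theorem optimal_two_means (P : Measure E2) [IsProbabilityMeasure P] (hP : carpetEq P) :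
    (∫ x : E2, min (‖x - pt (1/6) (3/4)‖^2) (‖x - pt (5/6) (3/4)‖^2) ∂P = 31/288)
    ∧ ∀ (β : Finset E2) (hβ : β.Nonempty), β.card ≤ 2 →
        31/288 ≤ ∫ x : E2, β.inf' hβ (fun c => ‖x - c‖^2) ∂P := by
  classical
  refine ⟨hP.integral_min_sq_norm_eq, fun β hβ hcard ↦ ?_⟩
  obtain ⟨a, b, rfl⟩ := exists_eq_pair_of_card_le_two hβ hcard
  simpa using hP.le_integral_min_sq_norm a b
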